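/- Theorem 3.7, second current: under the same hypotheses (D ≠ 2, Δ := (D−2)/2, k := 2·D/(D−2), U smooth with u·U'(u) = k·U(u) for all u, and φ a smooth solution of □φ + U'(φ) = 0), define L x := (1/2)·Σ_{μ,ν} η μ ν · ∂_μ φ x · ∂_ν φ x − U(φ x), T^{μν} x := ∂^μ φ x · ∂^ν φ x − η μ ν · L x, and J^μ x := Δ · φ x · ∂^μ φ x + Σ_α (x α) · (∂^μ φ x · ∂_α φ x − (if μ = α then L x else 0)). Then for each fixed ν, the current H^{μν} x := (1/2)·Δ·η μ ν·(φ x)² + (1/2)·(Σ_{α,β} η α β · x α · x β)·T^{μν} x − (x ν)·J^μ x is conserved: Σ_μ ∂_μ (fun y ↦ H^{μν} y) x = 0 for all x. -/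

import Mathlib

open scoped BigOperators

noncomputable section

/-- Minkowski metric on `Fin D`. -/
def eta (D : ℕ) (μ ν : Fin D) : ℝ :=
  if μ = ν then (if (μ : ℕ) = 0 then 1 else -1) else 0

/-- Spacetime partial derivative `∂_μ F x`. -/
def pd {D : ℕ} (F : (Fin D → ℝ) → ℝ) (μ : Fin D) (x : Fin D → ℝ) : ℝ :=
  fderiv ℝ F x (Pi.single μ 1)

/-- Raised-index partial derivative `∂^μ F x`. -/
def pdu {D : ℕ} (F : (Fin D → ℝ) → ℝ) (μ : Fin D) (x : Fin D → ℝ) : ℝ :=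
  ∑ ν, eta D μ ν * pd F ν x

/-- d'Alembertian `□F x`. -/
def box {D : ℕ} (F : (Fin D → ℝ) → ℝ) (x : Fin D → ℝ) : ℝ :=
  ∑ μ, pd (fun y => pdu F μ y) μ x

/-- The canonical Lagrangian `(1/2) ∂_μφ ∂^μφ − U(φ)`. -/
def Lag {D : ℕ} (U : ℝ → ℝ) (φ : (Fin D → ℝ) → ℝ) (x : Fin D → ℝ) : ℝ :=
  (1/2) * ∑ μ, ∑ ν, eta D μ ν * pd φ μ x * pd φ ν x - U (φ x)

/-- Contravariant Energy–Momentum tensor `T^{μν}`. -/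
def EMTup {D : ℕ} (U : ℝ → ℝ) (φ : (Fin D → ℝ) → ℝ) (μ ν : Fin D) (x : Fin D → ℝ) : ℝ :=
  pdu φ μ x * pdu φ ν x - eta D μ ν * Lag U φ x

/-- Dilation current `J^μ`. -/
def Jcur {D : ℕ} (U : ℝ → ℝ) (φ : (Fin D → ℝ) → ℝ) (μ : Fin D) (x : Fin D → ℝ) : ℝ :=
  ((D : ℝ) - 2) / 2 * φ x * pdu φ μ x +
    ∑ α, x α * (pdu φ μ x * pd φ α x - (if μ = α then Lag U φ x else 0))

/-!
The dilation current is `J^μ = Δ φ ∂^μφ + x_α T^{μα}`. Since `∂_μ T^{μν} = ∂^νφ (□φ + U'(φ))` and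
the trace `η_{μα} T^{μα} = D U(φ) - Δ ∂_μφ ∂^μφ` cancels the kinetic part of `Δ ∂_μ(φ ∂^μφ)`, the
divergence of `J` vanishes on solutions as soon as `Δ u U'(u) = D U(u)`. In the divergence of
`H^{μν}` the remaining terms `Δ φ ∂^νφ + x_μ T^{μν} - J^ν` cancel by the symmetry of `T`.
-/

section Eta

variable {D : ℕ}

lemma eta_comm (μ ν : Fin D) : eta D μ ν = eta D ν μ := by
  unfold eta
  grind

lemma sum_eta_mul_eta (μ κ : Fin D) :
    ∑ ν, eta D μ ν * eta D ν κ = if μ = κ then 1 else 0 := by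
  simp only [eta, ite_mul, zero_mul, Finset.sum_ite_eq, Finset.mem_univ, if_true]
  split_ifs <;> norm_num

/-- Contraction of a vector with the Minkowski metric. As `η` is its own inverse, this both lowers
and raises the index. -/
def lowerIndex (v : Fin D → ℝ) (μ : Fin D) : ℝ :=
  ∑ ν, eta D μ ν * v ν

lemma lowerIndex_lowerIndex (v : Fin D → ℝ) (μ : Fin D) : lowerIndex (lowerIndex v) μ = v μ := by
  simp only [lowerIndex, Finset.mul_sum, ← mul_assoc]
  rw [Finset.sum_comm]
  simp only [← Finset.sum_mul, sum_eta_mul_eta, ite_mul, one_mul, zero_mul, Finset.sum_ite_eq,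
    Finset.mem_univ, if_true]

lemma sum_lowerIndex_mul (u v : Fin D → ℝ) :
    ∑ μ, lowerIndex u μ * v μ = ∑ μ, u μ * lowerIndex v μ := by
  simp only [lowerIndex, Finset.mul_sum, Finset.sum_mul]
  rw [Finset.sum_comm]
  refine Finset.sum_congr rfl fun ν _ => Finset.sum_congr rfl fun μ _ => ?_
  rw [eta_comm]
  ring

/-- The Minkowski square `x² = η_{αβ} x^α x^β`. -/
def minkowskiSq (x : Fin D → ℝ) : ℝ :=
  ∑ α, ∑ β, eta D α β * x α * x β

lemma minkowskiSq_eq_sum_mul_lowerIndex (x : Fin D → ℝ) :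
    minkowskiSq x = ∑ α, x α * lowerIndex x α := by
  simp only [minkowskiSq, lowerIndex, Finset.mul_sum, mul_left_comm, mul_assoc]

end Eta

section PartialDerivatives

variable {D : ℕ} {F G : (Fin D → ℝ) → ℝ} {x : Fin D → ℝ}

lemma pd_add (hF : DifferentiableAt ℝ F x) (hG : DifferentiableAt ℝ G x) (μ : Fin D) :
    pd (fun y => F y + G y) μ x = pd F μ x + pd G μ x := by
  simp [pd, fderiv_fun_add hF hG]

lemma pd_sub (hF : DifferentiableAt ℝ F x) (hG : DifferentiableAt ℝ G x) (μ : Fin D) :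
    pd (fun y => F y - G y) μ x = pd F μ x - pd G μ x := by
  simp [pd, fderiv_fun_sub hF hG]

lemma pd_mul (hF : DifferentiableAt ℝ F x) (hG : DifferentiableAt ℝ G x) (μ : Fin D) :
    pd (fun y => F y * G y) μ x = pd F μ x * G x + F x * pd G μ x := by
  simp [pd, fderiv_fun_mul hF hG, add_comm, mul_comm]

lemma pd_const_mul (hF : DifferentiableAt ℝ F x) (c : ℝ) (μ : Fin D) :
    pd (fun y => c * F y) μ x = c * pd F μ x := by
  simp [pd, fderiv_const_mul hF]

lemma pd_sum {ι : Type*} {s : Finset ι} {f : ι → (Fin D → ℝ) → ℝ}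
    (hf : ∀ i ∈ s, DifferentiableAt ℝ (f i) x) (μ : Fin D) :
    pd (fun y => ∑ i ∈ s, f i y) μ x = ∑ i ∈ s, pd (f i) μ x := by
  simp [pd, fderiv_fun_sum hf]

lemma pd_comp {U : ℝ → ℝ} (hU : DifferentiableAt ℝ U (F x)) (hF : DifferentiableAt ℝ F x)
    (μ : Fin D) : pd (fun y => U (F y)) μ x = deriv U (F x) * pd F μ x := by
  have hUF : HasFDerivAt (fun y => U (F y)) (deriv U (F x) • fderiv ℝ F x) x :=
    hU.hasDerivAt.comp_hasFDerivAt x hF.hasFDerivAt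
  simp [pd, hUF.fderiv]

lemma pd_coord (α μ : Fin D) :
    pd (fun y : Fin D → ℝ => y α) μ x = if α = μ then 1 else 0 := by
  simp [pd, fderiv_apply, Pi.single_apply]

lemma differentiable_pd (hF : ContDiff ℝ 2 F) (μ : Fin D) : Differentiable ℝ (pd F μ) :=
  ((hF.fderiv_right (m := 1) (by norm_num)).differentiable (by simp)).clm_apply
    (differentiable_const _)

lemma differentiable_pdu (hF : ContDiff ℝ 2 F) (μ : Fin D) : Differentiable ℝ (pdu F μ) := by
  have := differentiable_pd hF
  unfold pdu
  fun_prop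

lemma pd_pd_comm (hF : ContDiff ℝ 2 F) (μ ν : Fin D) (x : Fin D → ℝ) :
    pd (pd F μ) ν x = pd (pd F ν) μ x := by
  have hF' : DifferentiableAt ℝ (fderiv ℝ F) x :=
    (hF.fderiv_right (m := 1) (by norm_num)).differentiable (by simp) x
  have pd_pd_eq (α β : Fin D) :
      pd (pd F α) β x = fderiv ℝ (fderiv ℝ F) x (Pi.single β 1) (Pi.single α 1) := by
    unfold pd
    simp [fderiv_clm_apply hF' (differentiableAt_const _)]
  rw [pd_pd_eq, pd_pd_eq]
  exact hF.contDiffAt.isSymmSndFDerivAt (by simp) _ _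

lemma pd_pdu (hF : ContDiff ℝ 2 F) (μ ν : Fin D) (x : Fin D → ℝ) :
    pd (pdu F μ) ν x = lowerIndex (fun κ => pd (pd F κ) ν x) μ := by
  have hpd := differentiable_pd hF
  unfold pdu lowerIndex
  rw [pd_sum (fun κ _ => by fun_prop)]
  exact Finset.sum_congr rfl fun κ _ => pd_const_mul (hpd κ x) _ _

lemma lowerIndex_pdu (F : (Fin D → ℝ) → ℝ) (μ : Fin D) (x : Fin D → ℝ) :
    lowerIndex (fun ν => pdu F ν x) μ = pd F μ x :=
  lowerIndex_lowerIndex (fun ν => pd F ν x) μ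

@[fun_prop]
lemma differentiable_lowerIndex (α : Fin D) :
    Differentiable ℝ (fun y : Fin D → ℝ => lowerIndex y α) := by
  unfold lowerIndex
  fun_prop

lemma pd_lowerIndex (α μ : Fin D) :
    pd (fun y => lowerIndex y α) μ x = eta D α μ := by
  unfold lowerIndex
  rw [pd_sum (fun β _ => by fun_prop)]
  simp (disch := fun_prop) only [pd_const_mul, pd_coord, mul_ite, mul_one, mul_zero,
    Finset.sum_ite_eq', Finset.mem_univ, if_true]

@[fun_prop]
lemma differentiable_minkowskiSq : Differentiable ℝ (minkowskiSq (D := D)) := by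
  unfold minkowskiSq
  fun_prop

lemma pd_minkowskiSq (μ : Fin D) (x : Fin D → ℝ) :
    pd minkowskiSq μ x = 2 * lowerIndex x μ := by
  rw [funext minkowskiSq_eq_sum_mul_lowerIndex, pd_sum (fun α _ => by fun_prop)]
  simp (disch := fun_prop) only [pd_mul, pd_coord, pd_lowerIndex, Finset.sum_add_distrib,
    ite_mul, one_mul, zero_mul, Finset.sum_ite_eq', Finset.mem_univ, if_true]
  have contract : ∑ α, x α * eta D α μ = lowerIndex x μ :=
    Finset.sum_congr rfl fun α _ => by rw [eta_comm, mul_comm]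
  rw [contract]
  ring

end PartialDerivatives

section Divergence

variable {D : ℕ} {V W : Fin D → (Fin D → ℝ) → ℝ} {f : (Fin D → ℝ) → ℝ} {x : Fin D → ℝ}

/-- The divergence `∂_μ V^μ` of a vector field given by its contravariant components. -/
def divergence (V : Fin D → (Fin D → ℝ) → ℝ) (x : Fin D → ℝ) : ℝ :=
  ∑ μ, pd (V μ) μ x

lemma divergence_add (hV : ∀ μ, DifferentiableAt ℝ (V μ) x)
    (hW : ∀ μ, DifferentiableAt ℝ (W μ) x) :
    divergence (fun μ y => V μ y + W μ y) x = divergence V x + divergence W x := by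
  simp only [divergence, pd_add (hV _) (hW _), Finset.sum_add_distrib]

lemma divergence_sub (hV : ∀ μ, DifferentiableAt ℝ (V μ) x)
    (hW : ∀ μ, DifferentiableAt ℝ (W μ) x) :
    divergence (fun μ y => V μ y - W μ y) x = divergence V x - divergence W x := by
  simp only [divergence, pd_sub (hV _) (hW _), Finset.sum_sub_distrib]

lemma divergence_mul (hf : DifferentiableAt ℝ f x) (hV : ∀ μ, DifferentiableAt ℝ (V μ) x) :
    divergence (fun μ y => f y * V μ y) x = ∑ μ, pd f μ x * V μ x + f x * divergence V x := by
  simp only [divergence, pd_mul hf (hV _), Finset.sum_add_distrib, Finset.mul_sum]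

lemma divergence_const_mul (hV : ∀ μ, DifferentiableAt ℝ (V μ) x) (c : ℝ) :
    divergence (fun μ y => c * V μ y) x = c * divergence V x := by
  simp only [divergence, pd_const_mul (hV _), Finset.mul_sum]

lemma divergence_sum {ι : Type*} {s : Finset ι} {V : ι → Fin D → (Fin D → ℝ) → ℝ}
    (hV : ∀ i ∈ s, ∀ μ, DifferentiableAt ℝ (V i μ) x) :
    divergence (fun μ y => ∑ i ∈ s, V i μ y) x = ∑ i ∈ s, divergence (V i) x := by
  simp only [divergence, pd_sum (fun i hi => hV i hi _)]
  exact Finset.sum_comm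

lemma divergence_eta_mul (hf : DifferentiableAt ℝ f x) (ν : Fin D) :
    divergence (fun μ y => eta D μ ν * f y) x = pdu f ν x := by
  simp only [divergence, pdu, pd_const_mul hf, eta_comm ν]

lemma divergence_eta_mul_sq (hf : DifferentiableAt ℝ f x) (ν : Fin D) :
    divergence (fun μ y => eta D μ ν * f y ^ 2) x = 2 * (f x * pdu f ν x) := by
  rw [divergence_eta_mul (hf.fun_pow 2)]
  simp only [pow_two, pdu, pd_mul hf hf, Finset.mul_sum]
  exact Finset.sum_congr rfl fun μ _ => by ring

lemma divergence_coord_mul (hV : ∀ μ, DifferentiableAt ℝ (V μ) x) (ν : Fin D) :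
    divergence (fun μ y => y ν * V μ y) x = V ν x + x ν * divergence V x := by
  rw [divergence_mul (by fun_prop) hV]
  simp only [pd_coord, ite_mul, one_mul, zero_mul, Finset.sum_ite_eq, Finset.mem_univ, if_true]

lemma divergence_half_minkowskiSq_mul (hV : ∀ μ, DifferentiableAt ℝ (V μ) x) :
    divergence (fun μ y => 1 / 2 * minkowskiSq y * V μ y) x =
      ∑ μ, lowerIndex x μ * V μ x + 1 / 2 * minkowskiSq x * divergence V x := by
  have pd_half (μ : Fin D) : pd (fun y => 1 / 2 * minkowskiSq y) μ x = lowerIndex x μ := by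
    rw [pd_const_mul (by fun_prop), pd_minkowskiSq]
    ring
  simp only [divergence_mul (f := fun y => 1 / 2 * minkowskiSq y) (by fun_prop) hV, pd_half]

end Divergence

section EnergyMomentum

variable {D : ℕ} {U : ℝ → ℝ} {φ : (Fin D → ℝ) → ℝ}

lemma Lag_eq (U : ℝ → ℝ) (φ : (Fin D → ℝ) → ℝ) (x : Fin D → ℝ) :
    Lag U φ x = 1 / 2 * ∑ μ, pd φ μ x * pdu φ μ x - U (φ x) := by
  simp only [Lag, pdu, Finset.mul_sum, mul_left_comm, mul_assoc]

lemma differentiable_Lag (hU : Differentiable ℝ U) (hφ : ContDiff ℝ 2 φ) :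
    Differentiable ℝ (Lag U φ) := by
  have := differentiable_pd hφ
  have : Differentiable ℝ φ := hφ.differentiable (by simp)
  unfold Lag
  fun_prop

lemma pd_Lag (hU : Differentiable ℝ U) (hφ : ContDiff ℝ 2 φ) (ν : Fin D) (x : Fin D → ℝ) :
    pd (Lag U φ) ν x = ∑ μ, pdu φ μ x * pd (pd φ μ) ν x - deriv U (φ x) * pd φ ν x := by
  have hφ₁ : Differentiable ℝ φ := hφ.differentiable (by simp)
  have hpd := differentiable_pd hφ
  have hpdu := differentiable_pdu hφ
  have kinetic_symm : ∑ μ, pd φ μ x * pd (pdu φ μ) ν x = ∑ μ, pdu φ μ x * pd (pd φ μ) ν x := by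
    simp only [pd_pdu hφ]
    exact (sum_lowerIndex_mul (fun μ => pd φ μ x) _).symm
  rw [funext (Lag_eq U φ), pd_sub (by fun_prop) (by fun_prop), pd_const_mul (by fun_prop),
    pd_sum (fun μ _ => by fun_prop), pd_comp (hU _) (hφ₁ x)]
  simp (disch := fun_prop) only [pd_mul, Finset.sum_add_distrib, kinetic_symm,
    mul_comm (pd (pd φ _) _ _)]
  ring

lemma pdu_Lag (hU : Differentiable ℝ U) (hφ : ContDiff ℝ 2 φ) (ν : Fin D) (x : Fin D → ℝ) :
    pdu (Lag U φ) ν x = ∑ μ, pd (pdu φ ν) μ x * pdu φ μ x - deriv U (φ x) * pdu φ ν x := by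
  have raise_hessian : ∑ κ, eta D ν κ * ∑ μ, pdu φ μ x * pd (pd φ μ) κ x =
      ∑ μ, pd (pdu φ ν) μ x * pdu φ μ x := by
    simp only [pd_pdu hφ, lowerIndex, Finset.mul_sum, Finset.sum_mul]
    rw [Finset.sum_comm]
    refine Finset.sum_congr rfl fun μ _ => Finset.sum_congr rfl fun κ _ => ?_
    rw [pd_pd_comm hφ μ κ]
    ring
  rw [← raise_hessian]
  simp only [pdu, pd_Lag hU hφ, mul_sub, Finset.sum_sub_distrib, Finset.mul_sum, mul_left_comm]

lemma EMTup_comm (U : ℝ → ℝ) (φ : (Fin D → ℝ) → ℝ) (μ ν : Fin D) (x : Fin D → ℝ) :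
    EMTup U φ μ ν x = EMTup U φ ν μ x := by
  simp only [EMTup, eta_comm μ ν, mul_comm (pdu φ μ x)]

lemma differentiable_EMTup (hU : Differentiable ℝ U) (hφ : ContDiff ℝ 2 φ) (μ ν : Fin D) :
    Differentiable ℝ (EMTup U φ μ ν) := by
  have := differentiable_pdu hφ
  have := differentiable_Lag hU hφ
  unfold EMTup
  fun_prop

lemma lowerIndex_EMTup (U : ℝ → ℝ) (φ : (Fin D → ℝ) → ℝ) (μ α : Fin D) (x : Fin D → ℝ) :
    lowerIndex (fun ν => EMTup U φ μ ν x) α =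
      pdu φ μ x * pd φ α x - if μ = α then Lag U φ x else 0 := by
  have lower_eta : ∑ ν, eta D α ν * eta D μ ν = if μ = α then 1 else 0 := by
    simp only [eta_comm μ, sum_eta_mul_eta, eq_comm]
  calc lowerIndex (fun ν => EMTup U φ μ ν x) α
      = pdu φ μ x * lowerIndex (fun ν => pdu φ ν x) α
          - (∑ ν, eta D α ν * eta D μ ν) * Lag U φ x := by
        simp only [lowerIndex, EMTup, mul_sub, Finset.sum_sub_distrib, Finset.mul_sum,
          Finset.sum_mul, mul_left_comm, mul_assoc]
    _ = _ := by rw [lowerIndex_pdu, lower_eta, ite_mul, one_mul, zero_mul]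

lemma trace_EMTup (U : ℝ → ℝ) (φ : (Fin D → ℝ) → ℝ) (x : Fin D → ℝ) :
    ∑ α, lowerIndex (fun ν => EMTup U φ α ν x) α =
      D * U (φ x) - ((D : ℝ) - 2) / 2 * ∑ μ, pd φ μ x * pdu φ μ x := by
  simp only [lowerIndex_EMTup, if_true, Finset.sum_sub_distrib, Finset.sum_const,
    Finset.card_univ, Fintype.card_fin, nsmul_eq_mul, Lag_eq, mul_comm (pdu φ _ x)]
  ring

theorem divergence_EMTup (hU : Differentiable ℝ U) (hφ : ContDiff ℝ 2 φ) (ν : Fin D)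
    (x : Fin D → ℝ) :
    divergence (fun μ => EMTup U φ μ ν) x = pdu φ ν x * (box φ x + deriv U (φ x)) := by
  have hpdu := differentiable_pdu hφ
  have hLag := differentiable_Lag hU hφ
  calc divergence (fun μ => EMTup U φ μ ν) x
      = divergence (fun μ y => pdu φ ν y * pdu φ μ y) x
          - divergence (fun μ y => eta D μ ν * Lag U φ y) x := by
        rw [← divergence_sub (fun μ => by fun_prop) (fun μ => by fun_prop)]
        simp only [mul_comm (pdu φ ν _)]
        rfl
    _ = (∑ μ, pd (pdu φ ν) μ x * pdu φ μ x + pdu φ ν x * box φ x) - pdu (Lag U φ) ν x := by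
        rw [divergence_mul (hpdu ν x) (fun μ => hpdu μ x), divergence_eta_mul (hLag x)]
        rfl
    _ = pdu φ ν x * (box φ x + deriv U (φ x)) := by
        rw [pdu_Lag hU hφ]
        ring

end EnergyMomentum

section Currents

variable {D : ℕ} {U : ℝ → ℝ} {φ : (Fin D → ℝ) → ℝ}

lemma Jcur_eq (U : ℝ → ℝ) (φ : (Fin D → ℝ) → ℝ) (μ : Fin D) (x : Fin D → ℝ) :
    Jcur U φ μ x = ((D : ℝ) - 2) / 2 * (φ x * pdu φ μ x)
      + ∑ α, lowerIndex x α * EMTup U φ μ α x := by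
  rw [sum_lowerIndex_mul]
  simp only [Jcur, lowerIndex_EMTup, mul_assoc]

lemma differentiable_Jcur (hU : Differentiable ℝ U) (hφ : ContDiff ℝ 2 φ) (μ : Fin D) :
    Differentiable ℝ (Jcur U φ μ) := by
  have : Differentiable ℝ φ := hφ.differentiable (by simp)
  have := differentiable_pdu hφ
  have := differentiable_EMTup hU hφ
  rw [funext (Jcur_eq U φ μ)]
  fun_prop

lemma divergence_lowerIndex_mul_EMTup (hU : Differentiable ℝ U) (hφ : ContDiff ℝ 2 φ)
    (x : Fin D → ℝ) :
    divergence (fun μ y => ∑ α, lowerIndex y α * EMTup U φ μ α y) x =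
      ∑ α, lowerIndex (fun ν => EMTup U φ α ν x) α
        + (∑ α, x α * pd φ α x) * (box φ x + deriv U (φ x)) := by
  have hT := differentiable_EMTup hU hφ
  have contract (α : Fin D) : ∑ μ, eta D α μ * EMTup U φ μ α x =
      lowerIndex (fun ν => EMTup U φ α ν x) α :=
    Finset.sum_congr rfl fun μ _ => by rw [EMTup_comm]
  have lower_pdu : ∑ α, lowerIndex x α * pdu φ α x = ∑ α, x α * pd φ α x := by
    simp only [sum_lowerIndex_mul, lowerIndex_pdu]
  rw [divergence_sum (fun α _ μ => by fun_prop), ← lower_pdu]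
  simp only [divergence_mul (differentiable_lowerIndex _ x) (fun μ => hT μ _ x), pd_lowerIndex,
    contract, divergence_EMTup hU hφ, Finset.sum_add_distrib, Finset.sum_mul, mul_assoc]

theorem divergence_Jcur (hU : Differentiable ℝ U) (hφ : ContDiff ℝ 2 φ) (x : Fin D → ℝ) :
    divergence (Jcur U φ) x =
      (((D : ℝ) - 2) / 2 * φ x + ∑ α, x α * pd φ α x) * (box φ x + deriv U (φ x))
        - (((D : ℝ) - 2) / 2 * (φ x * deriv U (φ x)) - D * U (φ x)) := by
  have hφ₁ : Differentiable ℝ φ := hφ.differentiable (by simp)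
  have hpdu := differentiable_pdu hφ
  have hT := differentiable_EMTup hU hφ
  have div_grad : divergence (pdu φ) x = box φ x := rfl
  rw [funext₂ (Jcur_eq U φ), divergence_add (fun μ => by fun_prop) (fun μ => by fun_prop),
    divergence_const_mul (fun μ => by fun_prop),
    divergence_mul (hφ₁ x) (fun μ => hpdu μ x), div_grad,
    divergence_lowerIndex_mul_EMTup hU hφ, trace_EMTup]
  ring

/-- The current `H^{μν}` with its free index `ν` first, so that
`specialConformalCurrent U φ ν` is a vector field: the Noether current of the special conformal
transformation in direction `ν`. -/
def specialConformalCurrent (U : ℝ → ℝ) (φ : (Fin D → ℝ) → ℝ) (ν μ : Fin D) (x : Fin D → ℝ) : ℝ :=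
  (1/2) * (((D : ℝ) - 2) / 2) * eta D μ ν * (φ x)^2 +
    (1/2) * minkowskiSq x * EMTup U φ μ ν x - x ν * Jcur U φ μ x

theorem divergence_specialConformalCurrent (hU : Differentiable ℝ U) (hφ : ContDiff ℝ 2 φ)
    (ν : Fin D) (x : Fin D → ℝ) :
    divergence (specialConformalCurrent U φ ν) x =
      1 / 2 * minkowskiSq x * divergence (fun μ => EMTup U φ μ ν) x
        - x ν * divergence (Jcur U φ) x := by
  have hφ₁ : Differentiable ℝ φ := hφ.differentiable (by simp)
  have hT := differentiable_EMTup hU hφ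
  have hJ := differentiable_Jcur hU hφ
  have J_eq : Jcur U φ ν x = ((D : ℝ) - 2) / 2 * (φ x * pdu φ ν x)
      + ∑ μ, lowerIndex x μ * EMTup U φ μ ν x := by
    simp only [Jcur_eq, EMTup_comm U φ ν]
  unfold specialConformalCurrent
  rw [divergence_sub (fun μ => by fun_prop) (fun μ => by fun_prop),
    divergence_add (fun μ => by fun_prop) (fun μ => by fun_prop),
    divergence_half_minkowskiSq_mul (fun μ => hT μ ν x),
    divergence_coord_mul (fun μ => hJ μ x), J_eq]
  simp only [mul_assoc _ (eta D _ ν)]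
  rw [divergence_const_mul (fun μ => by fun_prop), divergence_eta_mul_sq (hφ₁ x)]
  ring

end Currents

theorem homogeneous_potential_second_current_general {D : ℕ} {U : ℝ → ℝ}
    (hU : Differentiable ℝ U)
    (hhom : ∀ u : ℝ, ((D : ℝ) - 2) / 2 * (u * deriv U u) = D * U u)
    {φ : (Fin D → ℝ) → ℝ} (hφ : ContDiff ℝ 2 φ)
    (hEL : ∀ x, box φ x + deriv U (φ x) = 0) (ν : Fin D) (x : Fin D → ℝ) :
    divergence (specialConformalCurrent U φ ν) x = 0 := by
  rw [divergence_specialConformalCurrent hU hφ, divergence_EMTup hU hφ, divergence_Jcur hU hφ,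
    hEL, hhom]
  ring

/-- Theorem 3.7, second current: the tensor `H^{μν}` is conserved in its first index. -/
theorem homogeneous_potential_second_current {D : ℕ} (hD : 1 ≤ D) (hD2 : D ≠ 2)
    (U : ℝ → ℝ) (hU : ContDiff ℝ (⊤ : ℕ∞) U)
    (hhom : ∀ u : ℝ, u * deriv U u = (2 * (D : ℝ) / ((D : ℝ) - 2)) * U u)
    (φ : (Fin D → ℝ) → ℝ) (hφ : ContDiff ℝ (⊤ : ℕ∞) φ)
    (hEL : ∀ x, box φ x + deriv U (φ x) = 0) :
    ∀ (ν : Fin D) (x : Fin D → ℝ),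
      ∑ μ, pd (fun y =>
        (1/2) * (((D : ℝ) - 2) / 2) * eta D μ ν * (φ y)^2 +
          (1/2) * (∑ α, ∑ β, eta D α β * y α * y β) * EMTup U φ μ ν y -
          y ν * Jcur U φ μ y) μ x = 0 := by
  have hD2' : (D : ℝ) - 2 ≠ 0 := sub_ne_zero.mpr (mod_cast hD2)
  exact homogeneous_potential_second_current_general (hU.differentiable (by simp))
    (fun u => by rw [hhom]; field_simp) (contDiff_infty.mp hφ 2) hEL

end
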